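/- Let (i_t, j_t, λ_t), t ≥ 0, be any sequence with 1 ≤ i_t < j_t ≤ n and λ_t ∈ [0,1]. Let (X_t) be the deterministic sequence in M_n obtained from a given X_0 ∈ M_n by applying at each time t the Gibbs-sampler update rule on M_n with (i_t, j_t, λ_t), and let (S_t) be the deterministic sequence in Δ_n obtained from a given S_0 ∈ Δ_n by applying at each time t the simplex update S_{t+1}[i_t] = λ_t(S_t[i_t] + S_t[j_t]), S_{t+1}[j_t] = (1−λ_t)(S_t[i_t] + S_t[j_t]), with all other coordinates unchanged. If X_0[i,1] ≥ S_0[i] for all 1 ≤ i ≤ n, then X_t[i,1] ≥ S_t[i] for all t ≥ 0 and all 1 ≤ i ≤ n. -/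

import Mathlib

open MeasureTheory

noncomputable section

/-- Uniform probability measure on a finset. -/
def unifOn {α : Type*} [MeasurableSpace α] (s : Finset α) : Measure α :=
  (s.card : ENNReal)⁻¹ • ∑ a ∈ s, Measure.dirac a

/-- Total variation distance between two measures. -/
def tvDist {α : Type*} [MeasurableSpace α] (μ ν : Measure α) : ℝ :=
  ⨆ A : {A : Set α // MeasurableSet A}, ((μ A).toReal - (ν A).toReal)

/-- The set `M_n` of nonnegative `n × 2` matrices with row sums `2` and column sums `n`. -/
def MSet (n : ℕ) : Set (Fin n × Fin 2 → ℝ) :=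
  {x | (∀ p, 0 ≤ x p) ∧ (∀ i : Fin n, x (i, 0) + x (i, 1) = 2) ∧
    (∀ j : Fin 2, ∑ i : Fin n, x (i, j) = n)}

/-- The uniform (normalized `(n-1)`-dimensional Hausdorff) measure on `M_n`. -/
def UM (n : ℕ) : Measure (Fin n × Fin 2 → ℝ) :=
  (μH[(n : ℝ) - 1] (MSet n))⁻¹ • (μH[(n : ℝ) - 1]).restrict (MSet n)

/-- One step of the Gibbs sampler on `M_n`, updating the pair of rows `u.1 = (i, j)`
using the uniform variable `u.2 = λ`. -/
def stepM (n : ℕ) (x : Fin n × Fin 2 → ℝ) (u : (Fin n × Fin n) × ℝ) :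
    Fin n × Fin 2 → ℝ := fun p =>
  let i := u.1.1
  let j := u.1.2
  let l := u.2
  let d := 2 - x (i, 0) - x (j, 0)
  if p = (i, 0) then (if 0 ≤ d then l * (2 - d) else 2 * l - (1 - l) * d)
  else if p = (j, 0) then (if 0 ≤ d then (1 - l) * (2 - d) else 2 * (1 - l) - l * d)
  else if p = (i, 1) then (if 0 ≤ d then 2 * (1 - l) + l * d else (1 - l) * (2 + d))
  else if p = (j, 1) then (if 0 ≤ d then 2 * l + (1 - l) * d else l * (2 + d))
  else x p

/-- The set of ordered pairs `(i, j)` with `i < j`. -/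
def pairsF (n : ℕ) : Finset (Fin n × Fin n) := Finset.univ.filter fun p => p.1 < p.2

/-- Law of the random update datum: `(i, j)` uniform among pairs `i < j`, and
`λ` uniform on `[0,1]`. -/
def driveM (n : ℕ) : Measure ((Fin n × Fin n) × ℝ) :=
  (unifOn (pairsF n)).prod ((volume : Measure ℝ).restrict (Set.Icc 0 1))

/-- Law of the Gibbs sampler on `M_n` after `T` steps started at `x`. -/
def lawM (n : ℕ) (x : Fin n × Fin 2 → ℝ) (T : ℕ) : Measure (Fin n × Fin 2 → ℝ) :=
  Measure.map (fun ω : Fin T → (Fin n × Fin n) × ℝ => (List.ofFn ω).foldl (stepM n) x)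
    (Measure.pi fun _ => driveM n)

/-- Law of the `(T+1)`-step path of the Gibbs sampler on `M_n` with initial distribution `μ`. -/
def pathM (n T : ℕ) (μ : Measure (Fin n × Fin 2 → ℝ)) :
    Measure (Fin (T + 1) → Fin n × Fin 2 → ℝ) :=
  Measure.map (fun p : (Fin n × Fin 2 → ℝ) × (Fin T → (Fin n × Fin n) × ℝ) =>
      fun s : Fin (T + 1) => ((List.ofFn p.2).take s).foldl (stepM n) p.1)
    (μ.prod (Measure.pi fun _ => driveM n))


/-- The standard simplex in `ℝ^n`. -/
def simplexS (n : ℕ) : Set (Fin n → ℝ) :=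
  {x | (∀ i, 0 ≤ x i) ∧ ∑ i, x i = 1}

/-- The Gibbs-sampler update of `s` on the simplex at the pair `(i, j)` with parameter `l`. -/
def stepS (n : ℕ) (s : Fin n → ℝ) (i j : Fin n) (l : ℝ) : Fin n → ℝ :=
  Function.update (Function.update s i (l * (s i + s j))) j ((1 - l) * (s i + s j))

/-! Given the total `m` of the two updated first-column entries, each of them ranges over the
interval `[max (m - 2) 0, min m 2]`, and the matrix update places `x[i,1]` at fraction `λ` of that
interval and `x[j,1]` at fraction `1 - λ`. The simplex update does the same with the interval
`[0, σ]`, where `σ = s[i] + s[j]`. If `s` is dominated by the first column then `σ ≤ m`, and since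
the simplex update preserves nonnegativity and total mass, `σ ≤ 2` at all times; hence both
endpoints of `[0, σ]` lie below those of the matrix interval. -/

/-- The first-column entry chosen by the Gibbs sampler on `M_n`: the point at fraction `l` of the
interval `[max (m - 2) 0, min m 2]` of values available to one of two entries of `[0, 2]` that sum
to `m`. It merges the two cases `0 ≤ δ` and `δ < 0` of the update rule, where `δ = 2 - m`. -/
def gibbsEntry (l m : ℝ) : ℝ := l * min m 2 + (1 - l) * max (m - 2) 0

theorem gibbsEntry_of_le_two (l : ℝ) {m : ℝ} (hm : m ≤ 2) : gibbsEntry l m = l * m := by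
  simp [gibbsEntry, hm]

theorem gibbsEntry_of_two_le (l : ℝ) {m : ℝ} (hm : 2 ≤ m) :
    gibbsEntry l m = 2 * l + (1 - l) * (m - 2) := by
  rw [gibbsEntry, min_eq_right hm, max_eq_left (sub_nonneg.2 hm), mul_comm l]

theorem mul_le_gibbsEntry {l m σ : ℝ} (hl : l ∈ Set.Icc (0 : ℝ) 1) (hm : σ ≤ m) (h2 : σ ≤ 2) :
    l * σ ≤ gibbsEntry l m :=
  le_add_of_le_of_nonneg (mul_le_mul_of_nonneg_left (le_min hm h2) hl.1)
    (mul_nonneg (sub_nonneg.2 hl.2) (le_max_right _ _))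

section Steps

variable {n : ℕ} {i j k : Fin n}

theorem stepM_apply_left (x : Fin n × Fin 2 → ℝ) (i j : Fin n) (l : ℝ) :
    stepM n x ((i, j), l) (i, 0) = gibbsEntry l (x (i, 0) + x (j, 0)) := by
  simp only [stepM, if_true]
  split_ifs with hδ
  · rw [gibbsEntry_of_le_two l (by linarith)]
    ring
  · rw [gibbsEntry_of_two_le l (by linarith)]
    ring

theorem stepM_apply_right (x : Fin n × Fin 2 → ℝ) (hij : i ≠ j) (l : ℝ) :
    stepM n x ((i, j), l) (j, 0) = gibbsEntry (1 - l) (x (i, 0) + x (j, 0)) := by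
  simp only [stepM, Prod.mk.injEq, hij.symm, false_and, if_false, if_true]
  split_ifs with hδ
  · rw [gibbsEntry_of_le_two _ (by linarith)]
    ring
  · rw [gibbsEntry_of_two_le _ (by linarith)]
    ring

theorem stepM_apply_of_ne (x : Fin n × Fin 2 → ℝ) (hki : k ≠ i) (hkj : k ≠ j) (l : ℝ)
    (c : Fin 2) : stepM n x ((i, j), l) (k, c) = x (k, c) := by
  simp [stepM, hki, hkj]

theorem stepS_apply_left (s : Fin n → ℝ) (hij : i ≠ j) (l : ℝ) :
    stepS n s i j l i = l * (s i + s j) := by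
  simp [stepS, hij]

theorem stepS_apply_right (s : Fin n → ℝ) (i j : Fin n) (l : ℝ) :
    stepS n s i j l j = (1 - l) * (s i + s j) := by
  simp [stepS]

theorem stepS_apply_of_ne (s : Fin n → ℝ) (hki : k ≠ i) (hkj : k ≠ j) (l : ℝ) :
    stepS n s i j l k = s k := by
  simp [stepS, hki, hkj]

theorem stepS_nonneg {s : Fin n → ℝ} (hs : 0 ≤ s) (i j : Fin n) {l : ℝ}
    (hl : l ∈ Set.Icc (0 : ℝ) 1) : 0 ≤ stepS n s i j l := by
  have hσ : 0 ≤ s i + s j := add_nonneg (hs i) (hs j)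
  have hi : 0 ≤ Function.update s i (l * (s i + s j)) :=
    le_update_iff.2 ⟨mul_nonneg hl.1 hσ, fun k _ ↦ hs k⟩
  exact le_update_iff.2 ⟨mul_nonneg (sub_nonneg.2 hl.2) hσ, fun k _ ↦ hi k⟩

theorem stepS_eq_add_single_sub_single (s : Fin n → ℝ) (hij : i ≠ j) (l : ℝ) :
    stepS n s i j l =
      s + Pi.single i (l * (s i + s j) - s i) - Pi.single j (l * (s i + s j) - s i) := by
  ext k
  rcases eq_or_ne k i with rfl | hki
  · simp [stepS_apply_left s hij, hij]
  rcases eq_or_ne k j with rfl | hkj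
  · simp only [stepS_apply_right, Pi.sub_apply, Pi.add_apply, Pi.single_eq_of_ne hki,
      Pi.single_eq_same]
    ring
  · simp [stepS_apply_of_ne s hki hkj, hki, hkj]

theorem sum_stepS (s : Fin n → ℝ) (hij : i ≠ j) (l : ℝ) :
    ∑ k, stepS n s i j l k = ∑ k, s k := by
  simp [stepS_eq_add_single_sub_single s hij, Finset.sum_add_distrib]

theorem stepS_le_stepM {s : Fin n → ℝ} {x : Fin n × Fin 2 → ℝ} (hij : i ≠ j) {l : ℝ}
    (hl : l ∈ Set.Icc (0 : ℝ) 1) (hpair : s i + s j ≤ 2) (hsx : ∀ k, s k ≤ x (k, 0))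
    (k : Fin n) : stepS n s i j l k ≤ stepM n x ((i, j), l) (k, 0) := by
  have hσ : s i + s j ≤ x (i, 0) + x (j, 0) := add_le_add (hsx i) (hsx j)
  rcases eq_or_ne k i with rfl | hki
  · rw [stepS_apply_left s hij, stepM_apply_left]
    exact mul_le_gibbsEntry hl hσ hpair
  rcases eq_or_ne k j with rfl | hkj
  · rw [stepS_apply_right, stepM_apply_right x hij]
    exact mul_le_gibbsEntry (Set.Icc.mem_iff_one_sub_mem.1 hl) hσ hpair
  · rw [stepS_apply_of_ne s hki hkj, stepM_apply_of_ne x hki hkj]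
    exact hsx k

end Steps

theorem nonneg_and_sum_eq_of_stepS {n : ℕ} {I J : ℕ → Fin n} (hIJ : ∀ t, I t ≠ J t)
    {lam : ℕ → ℝ} (hlam : ∀ t, lam t ∈ Set.Icc (0 : ℝ) 1) {S : ℕ → Fin n → ℝ} (hS0 : 0 ≤ S 0)
    (hSstep : ∀ t, S (t + 1) = stepS n (S t) (I t) (J t) (lam t)) (t : ℕ) :
    0 ≤ S t ∧ ∑ i, S t i = ∑ i, S 0 i := by
  induction t with
  | zero => exact ⟨hS0, rfl⟩
  | succ t ih =>
    rw [hSstep]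
    exact ⟨stepS_nonneg ih.1 _ _ (hlam t), (sum_stepS _ (hIJ t) _).trans ih.2⟩

theorem narrow_matrices_dominate_simplex_general {n : ℕ} {I J : ℕ → Fin n}
    (hIJ : ∀ t, I t ≠ J t) {lam : ℕ → ℝ} (hlam : ∀ t, lam t ∈ Set.Icc (0 : ℝ) 1)
    {X : ℕ → Fin n × Fin 2 → ℝ} {S : ℕ → Fin n → ℝ} (hS0 : 0 ≤ S 0) (hmass : ∑ i, S 0 i ≤ 2)
    (hXstep : ∀ t, X (t + 1) = stepM n (X t) ((I t, J t), lam t))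
    (hSstep : ∀ t, S (t + 1) = stepS n (S t) (I t) (J t) (lam t))
    (hinit : ∀ i, S 0 i ≤ X 0 (i, 0)) (t : ℕ) (i : Fin n) : S t i ≤ X t (i, 0) := by
  induction t generalizing i with
  | zero => exact hinit i
  | succ t ih =>
    obtain ⟨hnonneg, hsum⟩ := nonneg_and_sum_eq_of_stepS hIJ hlam hS0 hSstep t
    have hpair : S t (I t) + S t (J t) ≤ 2 :=
      calc S t (I t) + S t (J t) ≤ ∑ k, S t k :=
            Finset.add_le_sum (fun k _ ↦ hnonneg k) (Finset.mem_univ _) (Finset.mem_univ _) (hIJ t)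
        _ ≤ 2 := hsum.trans_le hmass
    rw [hXstep, hSstep]
    exact stepS_le_stepM (hIJ t) (hlam t) hpair ih i

/-- Monotone domination of the simplex Gibbs sampler by the first column of the Gibbs
sampler on narrow matrices, when both are driven by the same update sequence. -/
theorem narrow_matrices_dominate_simplex
    (n : ℕ) (I J : ℕ → Fin n) (hIJ : ∀ t, I t < J t)
    (lam : ℕ → ℝ) (hlam : ∀ t, lam t ∈ Set.Icc (0 : ℝ) 1)
    (X : ℕ → Fin n × Fin 2 → ℝ) (S : ℕ → Fin n → ℝ)
    (hX0 : X 0 ∈ MSet n) (hS0 : S 0 ∈ simplexS n)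
    (hXstep : ∀ t, X (t + 1) = stepM n (X t) ((I t, J t), lam t))
    (hSstep : ∀ t, S (t + 1) = stepS n (S t) (I t) (J t) (lam t))
    (hinit : ∀ i, S 0 i ≤ X 0 (i, 0)) :
    ∀ t i, S t i ≤ X t (i, 0) :=
  narrow_matrices_dominate_simplex_general (fun t ↦ (hIJ t).ne) hlam hS0.1
    (hS0.2.trans_le one_le_two) hXstep hSstep hinit

end
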